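/- Let n ∈ S and let k ≥ 1 be the integer with 2^{k-1} < n ≤ 2^k. If p ∈ 𝒰(x_n) with 1 < p < q_KL, then the unique p-expansion (d_i)_{i≥1} of x_n begins with τ_n, τ_{n+1}, …, τ_{2^k}, i.e. d_i = τ_{n+i-1} for all 1 ≤ i ≤ 2^k − n + 1. -/

import Mathlib

/-!
Write `q` for the Komornik–Loreti base, `x_m` for the value of `τ_m τ_{m+1} …` in base `q`, and
let `p < q`. A unique expansion `d` of `x_n` in base `p` satisfies: after a digit `0` the tail has
value `< 1`, and after a digit `1` the reflected tail (`0 ↔ 1`) has value `< 1`, since otherwise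
that digit could be exchanged (`Univoque.val_tail_of_zero`, `Univoque.val_tail_of_one`). In base
`q` the same bounds, with `≤`, hold for the Thue–Morse sequence (`xval_le`, `xval_ge`), because its
shifts, reflected after a digit `1`, are lexicographically smaller than `τ₁τ₂…` (`tm_lex`).

Consider the first place where `d` differs from `τ_n τ_{n+1} …`. If `d` has the larger digit there,
its value in the smaller base `p` exceeds `x_n`. So `d` reads `τ_n … τ_{N-1} 0` with `τ_N = 1`,
and it remains to contradict this (`no_smaller_digit`). The tail bounds reduce everything to

  `x_n < (τ_n … τ_N)_p`  and  `x_n ≥ (τ_n … τ_N)_q + q^{-(N-n+1)} (1/(q-1) - 1)`.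

The recursion defining `S` enters through `τ_{3·2^a + t} = τ_t` for `t ≤ 2^a`: it leaves three
kinds of words `τ_n … τ_N` (`memS_wordType`).

* Some `1` of `d` is followed by a word whose reflection is `τ₁ … τ_{r-1} 1` with `τ_r = 0`. Its
  value in base `p` is at least `1`, which violates the bound on the reflected tail.
* `τ_n … τ_N = τ_m … τ_{2^i}` with `m ≤ 2^{i-1}`. Then `d` contains a `1` followed by the
  reflection of `τ₁ … τ_{2^{i-1}}`, and the tail bounds give `(τ₁ … τ_{2^i})_p < 1`. Propagating
  this along `x_{j+1} = q x_j - τ_j` yields `x_m - (τ_m … τ_{2^i})_p ≥ q^{m-2} (q - p)`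
  (`xval_sub_psum_ge`), whereas `x_m` exceeds the lower bound above by a term of relative size
  `q^{-2^i}` (`xval_two_pow_le`). The two are incompatible (`suffix_le`).
* The word is `1` or `01`. Since `d` is not constant, `p` exceeds the golden ratio
  (`Univoque.golden`), and the numerical bound `q < 9/5` suffices.
-/

open Filter Set

noncomputable section

/-- `d` is a `q`-expansion of `x`: all digits lie in `{0,1}` and
`x = ∑_{i=1}^∞ d_i q^{-i}`.  Here `d i` stands for the digit `d_{i+1}`. -/
def IsExpansion (q x : ℝ) (d : ℕ → ℕ) : Prop :=
  (∀ i, d i ≤ 1) ∧ x = ∑' i : ℕ, (d i : ℝ) / q ^ (i + 1)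

/-- `𝒰(x)`: the set of bases `q ∈ (1,2]` in which `x` has a unique expansion. -/
def UnivSet (x : ℝ) : Set ℝ :=
  {q | q ∈ Set.Ioc (1 : ℝ) 2 ∧ ∃! d : ℕ → ℕ, IsExpansion q x d}

/-- `q_s(x) = inf 𝒰(x)`. -/
def qs (x : ℝ) : ℝ := sInf (UnivSet x)

/-- The level set `L(q) = {x > 0 : q_s(x) = q}`. -/
def levelSet (q : ℝ) : Set ℝ := {x | 0 < x ∧ qs x = q}

/-- The golden ratio `q_G = (1+√5)/2`. -/
def qG : ℝ := (1 + Real.sqrt 5) / 2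

/-- The Thue–Morse sequence: `tm i = s_i mod 2`, where `s_i` is the number of
`1`s in the binary representation of `i`. -/
def tm (i : ℕ) : ℕ := (Nat.digits 2 i).sum % 2

/-- The set `S ⊆ ℕ`: `2, 3, 4 ∈ S`, and for `k ≥ 2` and `2^k < n ≤ 2^{k+1}`,
`n ∈ S` iff `n > 3·2^{k-1}` and `n - 3·2^{k-1} ∈ S`; no other elements. -/
inductive memS : ℕ → Prop
  | two : memS 2
  | three : memS 3
  | four : memS 4
  | step (k n : ℕ) (hk : 2 ≤ k) (h1 : 2 ^ k < n) (h2 : n ≤ 2 ^ (k + 1))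
      (h3 : 3 * 2 ^ (k - 1) < n) (h : memS (n - 3 * 2 ^ (k - 1))) : memS n

/-! ### Finite and infinite expansions -/

/-- The number with digit sequence `d` in base `q`; `d i` is the digit of `q ^ (-(i + 1))`. -/
def val (q : ℝ) (d : ℕ → ℕ) : ℝ := ∑' i : ℕ, (d i : ℝ) / q ^ (i + 1)

/-- The contribution of the first `l` digits of `d` in base `q`. -/
def psum (q : ℝ) (d : ℕ → ℕ) (l : ℕ) : ℝ := ∑ i ∈ Finset.range l, (d i : ℝ) / q ^ (i + 1)

lemma psum_succ (q : ℝ) (d : ℕ → ℕ) (l : ℕ) :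
    psum q d (l + 1) = psum q d l + (d l : ℝ) / q ^ (l + 1) := Finset.sum_range_succ _ _

lemma psum_congr {q : ℝ} {d e : ℕ → ℕ} {l : ℕ} (h : ∀ i < l, d i = e i) :
    psum q d l = psum q e l :=
  Finset.sum_congr rfl fun i hi => by rw [h i (Finset.mem_range.1 hi)]

lemma psum_nonneg {q : ℝ} (hq : 1 < q) (d : ℕ → ℕ) (l : ℕ) : 0 ≤ psum q d l :=
  Finset.sum_nonneg fun _ _ => by positivity

lemma psum_anti {p q : ℝ} (hp : 1 < p) (hpq : p ≤ q) (d : ℕ → ℕ) (l : ℕ) :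
    psum q d l ≤ psum p d l :=
  Finset.sum_le_sum fun _ _ => by gcongr

lemma psum_split (q : ℝ) (d : ℕ → ℕ) (a b : ℕ) :
    psum q d (a + b) = psum q d a + psum q (fun i => d (a + i)) b / q ^ a := by
  unfold psum
  rw [Finset.sum_range_add, Finset.sum_div]
  congr 1
  refine Finset.sum_congr rfl fun i _ => ?_
  rw [div_div, ← pow_add]
  congr 2
  ring

lemma psum_cons {q : ℝ} (hq : 1 < q) (d : ℕ → ℕ) (l : ℕ) :
    q * psum q d (l + 1) = d 0 + psum q (fun i => d (1 + i)) l := by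
  have hq0 : q ≠ 0 := by positivity
  have h1 : psum q d 1 = d 0 / q := by simp [psum]
  rw [add_comm l 1, psum_split, h1]
  field_simp

lemma psum_compl {q : ℝ} (hq : 1 < q) {d : ℕ → ℕ} (hd : ∀ i, d i ≤ 1) (l : ℕ) :
    psum q d l + psum q (fun i => 1 - d i) l = (1 - 1 / q ^ l) / (q - 1) := by
  have h1 : q - 1 ≠ 0 := by linarith
  have h0 : q ≠ 0 := by positivity
  induction l with
  | zero => simp [psum]
  | succ l ih =>
    rw [psum_succ, psum_succ]
    have e : (d l : ℝ) + ((1 - d l : ℕ) : ℝ) = 1 := by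
      rw [Nat.cast_sub (hd l)]; push_cast; ring
    have : psum q d l + (d l : ℝ) / q ^ (l + 1) +
        (psum q (fun i => 1 - d i) l + ((1 - d l : ℕ) : ℝ) / q ^ (l + 1)) =
        (psum q d l + psum q (fun i => 1 - d i) l) +
          ((d l : ℝ) + ((1 - d l : ℕ) : ℝ)) / q ^ (l + 1) := by ring
    rw [this, ih, e]
    field_simp
    ring

/-- Decreasing the base from `q` to `p` changes a finite expansion by at most the change of
`111…`. -/
lemma psum_sub_le {p q : ℝ} (hp : 1 < p) (hpq : p ≤ q) {d : ℕ → ℕ} (hd : ∀ i, d i ≤ 1) (l : ℕ) :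
    psum p d l - psum q d l ≤ 1 / (p - 1) - 1 / (q - 1) := by
  have h1 := psum_compl hp hd l
  have h2 := psum_compl (hp.trans_le hpq) hd l
  have h3 := psum_anti hp hpq (fun i => 1 - d i) l
  have h4 : 1 / q ^ l / (q - 1) ≤ 1 / p ^ l / (p - 1) := by
    have : 0 < p - 1 := by linarith
    gcongr
  rw [sub_div] at h1 h2
  linarith

lemma summable_val {q : ℝ} (hq : 1 < q) {d : ℕ → ℕ} (hd : ∀ i, d i ≤ 1) :
    Summable fun i : ℕ => (d i : ℝ) / q ^ (i + 1) := by
  have hg : Summable fun i : ℕ => (1 / q) ^ i :=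
    summable_geometric_of_lt_one (by positivity) (by rw [div_lt_one (by positivity)]; exact hq)
  refine Summable.of_nonneg_of_le (fun i => by positivity) (fun i => ?_) hg
  have h1 : (d i : ℝ) ≤ 1 := by exact_mod_cast hd i
  rw [one_div_pow]
  have : q ^ i ≤ q ^ (i + 1) := pow_le_pow_right₀ hq.le (by omega)
  gcongr

lemma val_split {q : ℝ} (hq : 1 < q) {d : ℕ → ℕ} (hd : ∀ i, d i ≤ 1) (l : ℕ) :
    val q d = psum q d l + val q (fun i => d (l + i)) / q ^ l := by
  unfold val psum
  rw [← (summable_val hq hd).sum_add_tsum_nat_add l, ← tsum_div_const]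
  congr 1
  refine tsum_congr fun i => ?_
  rw [div_div, ← pow_add, add_comm i l]
  congr 2
  ring

lemma val_cons {q : ℝ} (hq : 1 < q) {d : ℕ → ℕ} (hd : ∀ i, d i ≤ 1) :
    q * val q d = d 0 + val q (fun i => d (1 + i)) := by
  have hq0 : q ≠ 0 := by positivity
  have h1 : psum q d 1 = d 0 / q := by simp [psum]
  rw [val_split hq hd 1, h1]
  field_simp

lemma val_nonneg {q : ℝ} (hq : 1 < q) (d : ℕ → ℕ) : 0 ≤ val q d :=
  tsum_nonneg fun _ => by positivity

lemma psum_le_val {q : ℝ} (hq : 1 < q) {d : ℕ → ℕ} (hd : ∀ i, d i ≤ 1) (l : ℕ) :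
    psum q d l ≤ val q d := by
  rw [val_split hq hd l]
  have := val_nonneg hq (fun i => d (l + i))
  have : 0 ≤ val q (fun i => d (l + i)) / q ^ l := by positivity
  linarith

lemma tendsto_psum {q : ℝ} (hq : 1 < q) {d : ℕ → ℕ} (hd : ∀ i, d i ≤ 1) :
    Tendsto (psum q d) atTop (nhds (val q d)) :=
  (summable_val hq hd).hasSum.tendsto_sum_nat

lemma tendsto_div_pow {q : ℝ} (hq : 1 < q) (C : ℝ) :
    Tendsto (fun n : ℕ => C / q ^ n) atTop (nhds 0) :=
  tendsto_const_nhds.div_atTop (tendsto_pow_atTop_atTop_of_one_lt hq)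

lemma val_compl {q : ℝ} (hq : 1 < q) {d : ℕ → ℕ} (hd : ∀ i, d i ≤ 1) :
    val q d + val q (fun i => 1 - d i) = 1 / (q - 1) := by
  have h1 := (tendsto_psum hq hd).add
    (tendsto_psum hq (d := fun i => 1 - d i) (fun i => Nat.sub_le _ _))
  refine tendsto_nhds_unique h1 ?_
  have h2 := ((tendsto_div_pow hq 1).const_sub 1).div_const (q - 1)
  rw [sub_zero] at h2
  exact h2.congr fun l => (psum_compl hq hd l).symm

lemma val_le {q : ℝ} (hq : 1 < q) {d : ℕ → ℕ} (hd : ∀ i, d i ≤ 1) : val q d ≤ 1 / (q - 1) := by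
  have := val_compl hq hd
  have := val_nonneg hq (fun i => 1 - d i)
  linarith

/-- The remainders of the greedy algorithm for `x` in base `q`. -/
def greedyRem (q x : ℝ) : ℕ → ℝ
  | 0 => x
  | n + 1 => if 1 ≤ q * greedyRem q x n then q * greedyRem q x n - 1 else q * greedyRem q x n

lemma exists_val_eq {q x : ℝ} (hq : 1 < q) (hq2 : q ≤ 2) (hx0 : 0 ≤ x) (hx1 : x ≤ 1 / (q - 1)) :
    ∃ d : ℕ → ℕ, (∀ i, d i ≤ 1) ∧ val q d = x := by
  classical
  have hq1 : 0 < q - 1 := by linarith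
  have hrem : ∀ n, 0 ≤ greedyRem q x n ∧ greedyRem q x n ≤ 1 / (q - 1) := by
    intro n
    induction n with
    | zero => exact ⟨hx0, hx1⟩
    | succ n ih =>
      obtain ⟨h0, h1⟩ := ih
      have h2 : q * greedyRem q x n ≤ q * (1 / (q - 1)) := by gcongr
      have h3 : q * (1 / (q - 1)) = 1 + 1 / (q - 1) := by field_simp; ring
      have h4 : 1 ≤ 1 / (q - 1) := by rw [le_div_iff₀ hq1]; linarith
      simp only [greedyRem]
      split_ifs with h
      · constructor <;> linarith
      · exact ⟨by positivity, by linarith⟩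
  let d : ℕ → ℕ := fun n => if 1 ≤ q * greedyRem q x n then 1 else 0
  have hd : ∀ i, d i ≤ 1 := fun i => by simp only [d]; split_ifs <;> omega
  have hp : ∀ n, psum q d n = x - greedyRem q x n / q ^ n := by
    intro n
    induction n with
    | zero => simp [psum, greedyRem]
    | succ n ih =>
      rw [psum_succ, ih]
      have hq0 : q ≠ 0 := by positivity
      simp only [d, greedyRem]
      split_ifs with h
      · push_cast
        field_simp
        ring
      · push_cast
        field_simp
        ring
  refine ⟨d, hd, tendsto_nhds_unique (tendsto_psum hq hd) ?_⟩
  have h0 : Tendsto (fun n : ℕ => greedyRem q x n / q ^ n) atTop (nhds 0) :=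
    squeeze_zero (fun n => div_nonneg (hrem n).1 (by positivity))
      (fun n => div_le_div_of_nonneg_right (hrem n).2 (by positivity))
      (tendsto_div_pow hq (1 / (q - 1)))
  have := h0.const_sub x
  rw [sub_zero] at this
  exact this.congr fun n => (hp n).symm

/-! ### Unique expansions -/

/-- `d` is a digit sequence and no other digit sequence has the same value in base `p`. -/
def Univoque (p : ℝ) (d : ℕ → ℕ) : Prop :=
  (∀ i, d i ≤ 1) ∧ ∀ e : ℕ → ℕ, (∀ i, e i ≤ 1) → val p e = val p d → e = d

lemma Univoque.tail {p : ℝ} (hp : 1 < p) {d : ℕ → ℕ} (h : Univoque p d) (l : ℕ) :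
    Univoque p (fun i => d (l + i)) := by
  refine ⟨fun i => h.1 _, fun e he hv => ?_⟩
  have h1 : ∀ i, (fun j => if j < l then d j else e (j - l)) i ≤ 1 := by
    intro i
    dsimp only
    split_ifs
    exacts [h.1 _, he _]
  have h2 := h.2 (fun j => if j < l then d j else e (j - l)) h1 (by
    rw [val_split hp h1 l, val_split hp h.1 l, ← hv]
    congr 1
    · exact psum_congr fun i hi => by simp [hi]
    · simp)
  funext i
  have := congrFun h2 (l + i)
  simpa using this

lemma Univoque.val_tail_of_zero {p : ℝ} (hp : 1 < p) (hp2 : p ≤ 2) {d : ℕ → ℕ}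
    (h : Univoque p d) {l : ℕ} (hl : d l = 0) : val p (fun i => d (l + 1 + i)) < 1 := by
  by_contra! hge
  have ht := h.tail hp l
  have hs := (h.tail hp (l + 1)).1
  have hle := val_le hp hs
  -- If the tail is at least `1`, the digit `0` can be traded for a digit `1`.
  obtain ⟨e, he, hev⟩ := exists_val_eq hp hp2 (sub_nonneg.2 hge) (by linarith)
  have hc : ∀ i, (fun i : ℕ => if i = 0 then 1 else e (i - 1)) i ≤ 1 := by
    intro i; dsimp only; split_ifs; exacts [le_rfl, he _]
  have h1 := val_cons hp hc
  have h2 := val_cons hp ht.1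
  have h3 : (fun i : ℕ => d (l + (1 + i))) = fun i => d (l + 1 + i) := by
    funext i; rw [add_assoc]
  simp only [h3, add_zero, hl] at h2
  simp [hev] at h1
  have h4 := congrFun (ht.2 _ hc (mul_left_cancel₀ (a := p) (by positivity) (by
    rw [h1, h2]; push_cast; ring))) 0
  simp [hl] at h4

lemma Univoque.val_tail_of_one {p : ℝ} (hp : 1 < p) (hp2 : p ≤ 2) {d : ℕ → ℕ}
    (h : Univoque p d) {l : ℕ} (hl : d l = 1) :
    1 / (p - 1) - 1 < val p (fun i => d (l + 1 + i)) := by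
  by_contra! hge
  have ht := h.tail hp l
  have hs := (h.tail hp (l + 1)).1
  have hnn := val_nonneg hp (fun i => d (l + 1 + i))
  -- If the tail is this small, the digit `1` can be traded for a digit `0`.
  obtain ⟨e, he, hev⟩ := exists_val_eq hp hp2
    (x := val p (fun i => d (l + 1 + i)) + 1) (by linarith) (by linarith)
  have hc : ∀ i, (fun i : ℕ => if i = 0 then 0 else e (i - 1)) i ≤ 1 := by
    intro i; dsimp only; split_ifs; exacts [zero_le_one, he _]
  have h1 := val_cons hp hc
  have h2 := val_cons hp ht.1
  have h3 : (fun i : ℕ => d (l + (1 + i))) = fun i => d (l + 1 + i) := by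
    funext i; rw [add_assoc]
  simp only [h3, add_zero, hl] at h2
  simp [hev] at h1
  have h4 := congrFun (ht.2 _ hc (mul_left_cancel₀ (a := p) (by positivity) (by
    rw [h1, h2]; push_cast; ring))) 0
  simp [hl] at h4

/-- A non-constant sequence is univoque only in bases above the golden ratio. -/
lemma Univoque.golden {p : ℝ} (hp : 1 < p) (hp2 : p ≤ 2) {d : ℕ → ℕ} (h : Univoque p d)
    {l : ℕ} (hl : d l ≠ d (l + 1)) : p + 1 < p ^ 2 := by
  have h0 := h.1 l
  have h1 := h.1 (l + 1)
  have hc := val_cons hp (h.tail hp (l + 1)).1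
  have h3 : (fun i : ℕ => d (l + 1 + (1 + i))) = fun i => d (l + 1 + 1 + i) := by
    funext i; congr 1; ring
  simp only [h3, add_zero] at hc
  have hp1 : 0 < p - 1 := by linarith
  have e : (1 / (p - 1) - 1) * (p - 1) = 2 - p := by field_simp; ring
  rcases (by omega : d l = 0 ∧ d (l + 1) = 1 ∨ d l = 1 ∧ d (l + 1) = 0) with ⟨a, b⟩ | ⟨a, b⟩
  · have u := h.val_tail_of_zero hp hp2 a
    have v := h.val_tail_of_one hp hp2 b
    rw [b] at hc
    push_cast at hc
    have : 1 / (p - 1) < p := by nlinarith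
    rw [div_lt_iff₀ hp1] at this
    nlinarith
  · have u := h.val_tail_of_one hp hp2 a
    have v := h.val_tail_of_zero hp hp2 b
    rw [b] at hc
    push_cast at hc
    have : p * (1 / (p - 1) - 1) < 1 := by nlinarith
    have : p * (1 / (p - 1) - 1) * (p - 1) < 1 * (p - 1) := by gcongr
    nlinarith

/-! ### The Thue–Morse sequence -/

lemma tm_le (n : ℕ) : tm n ≤ 1 := by unfold tm; omega

lemma tm_bit (n b : ℕ) (hb : b < 2) : tm (2 * n + b) = (tm n + b) % 2 := by
  rcases Nat.eq_zero_or_pos n with rfl | hn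
  · interval_cases b <;> simp [tm]
  · unfold tm
    rw [add_comm (2 * n) b, Nat.digits_add 2 (by norm_num) b n hb (Or.inr hn.ne')]
    simp only [List.sum_cons]
    omega

lemma tm_zero : tm 0 = 0 := by simp [tm]

lemma tm_block (a c t : ℕ) (ht : t < 2 ^ a) : tm (2 ^ a * c + t) = (tm c + tm t) % 2 := by
  induction a generalizing t with
  | zero =>
    obtain rfl : t = 0 := by simpa using ht
    have := tm_le c
    simp only [pow_zero, one_mul, add_zero, tm_zero]
    omega
  | succ a ih =>
    have h1 : 2 ^ (a + 1) * c + t = 2 * (2 ^ a * c + t / 2) + t % 2 := by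
      have := Nat.div_add_mod t 2
      rw [pow_succ]
      linarith
    have h2 := tm_bit (t / 2) (t % 2) (Nat.mod_lt _ (by norm_num))
    rw [Nat.div_add_mod t 2] at h2
    rw [h1, tm_bit _ _ (Nat.mod_lt _ (by norm_num)), ih (t / 2) (by rw [pow_succ] at ht; omega), h2]
    omega

lemma tm_one : tm 1 = 1 := by simp [tm]

lemma tm_two_pow_add (a t : ℕ) (ht : t < 2 ^ a) : tm (2 ^ a + t) = 1 - tm t := by
  have := tm_block a 1 t ht
  have := tm_le t
  simp only [mul_one, tm_one] at *
  omega

lemma tm_two_pow (a : ℕ) : tm (2 ^ a) = 1 := by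
  simpa [tm_zero] using tm_two_pow_add a 0 (by positivity)

lemma tm_three_mul_add (a t : ℕ) (ht : t ≤ 2 ^ a) : tm (3 * 2 ^ a + t) = tm t := by
  rcases ht.lt_or_eq with h | rfl
  · have h1 := tm_block a 3 t h
    have h2 : tm 3 = 0 := by simp [tm]
    have := tm_le t
    rw [mul_comm] at h1
    omega
  · rw [show 3 * 2 ^ a + 2 ^ a = 2 ^ (a + 2) by ring, tm_two_pow, tm_two_pow]

/-- The shift of the Thue–Morse sequence by `j + 1`, reflected if `tm j = 1`, is
lexicographically smaller than `τ₁τ₂…`; the first difference occurs at `v + 1`. -/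
lemma tm_lex (j : ℕ) (hj : 1 ≤ j) : ∃ v, tm (v + 1) = 1 ∧ tm (j + v + 1) = tm j ∧
    ∀ t ≤ v, tm (j + t) = (tm j + tm t) % 2 := by
  obtain ⟨a, m, ⟨b, rfl⟩, rfl⟩ := Nat.exists_eq_two_pow_mul_odd (n := j) (by omega)
  have hpos : 0 < 2 ^ a := by positivity
  have hj0 : tm (2 ^ a * (2 * b + 1)) = tm (2 * b + 1) := by
    have := tm_block a (2 * b + 1) 0 hpos
    have := tm_le (2 * b + 1)
    simp only [add_zero, tm_zero] at *
    omega
  have hlow : ∀ t < 2 ^ a, tm (2 ^ a * (2 * b + 1) + t) =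
      (tm (2 ^ a * (2 * b + 1)) + tm t) % 2 := fun t ht => by rw [tm_block a _ t ht, hj0]
  have hnext : ∀ t < 2 ^ (a + 1), tm (2 ^ a * (2 * b + 1) + (2 ^ a + t)) =
      (tm (b + 1) + tm t) % 2 := fun t ht => by
    rw [← tm_block (a + 1) _ t ht]; congr 1; ring
  have hb1 := tm_le (b + 1)
  have hj1 := tm_le (2 ^ a * (2 * b + 1))
  by_cases hc : tm (b + 1) = tm (2 ^ a * (2 * b + 1))
  · refine ⟨2 ^ a - 1, ?_, ?_, fun t ht => hlow t (by omega)⟩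
    · rw [Nat.sub_add_cancel hpos, tm_two_pow]
    · rw [add_assoc, Nat.sub_add_cancel hpos]
      have := hnext 0 (by positivity)
      simp only [add_zero, tm_zero] at this
      omega
  · have hpow : 2 ^ (a + 1) = 2 ^ a + 2 ^ a := by ring
    refine ⟨2 ^ (a + 1) - 1, ?_, ?_, fun t ht => ?_⟩
    · rw [Nat.sub_add_cancel Nat.one_le_two_pow, tm_two_pow]
    · rw [add_assoc, Nat.sub_add_cancel Nat.one_le_two_pow, hpow, hnext _ (by omega), tm_two_pow]
      omega
    · rcases lt_or_ge t (2 ^ a) with h | h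
      · exact hlow t h
      · obtain ⟨s, rfl⟩ := Nat.exists_eq_add_of_le h
        have := tm_le s
        rw [hnext s (by omega), tm_two_pow_add a s (by omega)]
        omega

/-! ### The numbers `x_m` in the Komornik–Loreti base -/

/-- `x_m`, the value of `τ_m τ_{m+1} …` in base `q`. -/
def xval (q : ℝ) (m : ℕ) : ℝ := val q (fun i => tm (m + i))

lemma xval_split {q : ℝ} (hq : 1 < q) (m l : ℕ) :
    xval q m = psum q (fun i => tm (m + i)) l + xval q (m + l) / q ^ l := by
  unfold xval
  rw [val_split hq (fun i => tm_le _) l]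
  simp only [add_assoc]

lemma xval_succ {q : ℝ} (hq : 1 < q) (m : ℕ) : q * xval q m = tm m + xval q (m + 1) := by
  unfold xval
  rw [val_cons hq (fun i => tm_le _)]
  simp only [add_assoc, add_zero]

/-- The iteration behind the lexicographic criterion: by `tm_lex`, the excess over `1` of the
reflected tail after `j` is at most `q ^ (-(v + 1))` times the excess of a later such tail. -/
lemma reflected_le_one {q : ℝ} (hq : 1 < q) (h1 : xval q 1 = 1) (j : ℕ) (hj : 1 ≤ j) :
    val q (fun i => (tm j + tm (j + 1 + i)) % 2) ≤ 1 := by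
  have hb : ∀ j, ∀ i, (fun i => (tm j + tm (j + 1 + i)) % 2) i ≤ 1 := fun j i => by
    dsimp only; omega
  have hC : 0 < 1 / (q - 1) := by
    have : 0 < q - 1 := by linarith
    positivity
  have key : ∀ n : ℕ, ∀ j, 1 ≤ j →
      val q (fun i => (tm j + tm (j + 1 + i)) % 2) - 1 ≤ 1 / (q - 1) / q ^ n := by
    intro n
    induction n with
    | zero =>
      intro j _
      have := val_le hq (hb j)
      simp only [pow_zero, div_one]
      linarith
    | succ n ih =>
      intro j hj
      obtain ⟨v, hv1, hv2, hv⟩ := tm_lex j hj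
      have e1 := val_split hq (hb j) (v + 1)
      have e2 := xval_split hq 1 (v + 1)
      have e3 : psum q (fun i => (tm j + tm (j + 1 + i)) % 2) v =
          psum q (fun i => tm (1 + i)) v := psum_congr fun i hi => by
        have h := hv (1 + i) (by omega)
        have := tm_le (1 + i)
        rw [add_assoc, h]
        omega
      have e4 : (fun i => (tm j + tm (j + 1 + (v + 1 + i))) % 2) =
          fun i => (tm (j + v + 1) + tm (j + v + 1 + 1 + i)) % 2 := by
        funext i
        rw [hv2]
        congr 3
        ring
      have e5 : (tm j + tm (j + 1 + v)) % 2 = 0 := by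
        rw [show j + 1 + v = j + v + 1 by ring, hv2]; omega
      rw [psum_succ, e3, e4, e5] at e1
      rw [psum_succ, add_comm 1 v, hv1, h1] at e2
      have e6 := ih (j + v + 1) (by omega)
      have e7 : 0 ≤ xval q (1 + (v + 1)) / q ^ (v + 1) := by
        have := val_nonneg hq (fun i => tm (1 + (v + 1) + i))
        unfold xval
        positivity
      have e8 : (val q (fun i => (tm (j + v + 1) + tm (j + v + 1 + 1 + i)) % 2) - 1) / q ^ (v + 1)
          ≤ 1 / (q - 1) / q ^ n / q ^ (v + 1) := by gcongr
      have e9 : 1 / (q - 1) / q ^ n / q ^ (v + 1) ≤ 1 / (q - 1) / q ^ (n + 1) := by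
        rw [div_div (1 / (q - 1)), ← pow_add]
        have : q ^ (n + 1) ≤ q ^ (n + (v + 1)) := pow_le_pow_right₀ hq.le (by omega)
        gcongr
      rw [sub_div] at e8
      push_cast at e1 e2
      rw [zero_div] at e1
      linarith
  have := ge_of_tendsto' (tendsto_div_pow hq (1 / (q - 1))) fun n => key n j hj
  linarith

lemma xval_ge {q : ℝ} (hq : 1 < q) (h1 : xval q 1 = 1) {j : ℕ} (hj : 1 ≤ j) (ht : tm j = 1) :
    1 / (q - 1) - 1 ≤ xval q (j + 1) := by
  have h := reflected_le_one hq h1 j hj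
  have e : (fun i => (tm j + tm (j + 1 + i)) % 2) = fun i => 1 - tm (j + 1 + i) := by
    funext i
    have := tm_le (j + 1 + i)
    omega
  rw [e] at h
  have := val_compl hq (d := fun i => tm (j + 1 + i)) (fun i => tm_le _)
  unfold xval
  linarith

lemma xval_le {q : ℝ} (hq : 1 < q) (hq2 : q < 2) (h1 : xval q 1 = 1) {j : ℕ} (hj : 1 ≤ j) :
    xval q j ≤ 1 := by
  induction j, hj using Nat.le_induction with
  | base => exact h1.le
  | succ j hj ih =>
    have hle := tm_le j
    rcases (by omega : tm j = 0 ∨ tm j = 1) with h | h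
    · have h' := reflected_le_one hq h1 j hj
      have e : (fun i => (tm j + tm (j + 1 + i)) % 2) = fun i => tm (j + 1 + i) := by
        funext i
        have := tm_le (j + 1 + i)
        omega
      rwa [e] at h'
    · have := xval_succ hq j
      rw [h] at this
      push_cast at this
      nlinarith

lemma xval_nonneg {q : ℝ} (hq : 1 < q) (m : ℕ) : 0 ≤ xval q m := val_nonneg hq _

lemma psum_four (q : ℝ) : psum q (fun i => tm (1 + i)) 4 = 1 / q + 1 / q ^ 2 + 1 / q ^ 4 := by
  simp [psum, Finset.sum_range_succ, tm]

lemma psum_eight (q : ℝ) : psum q (fun i => tm (1 + i)) 8 =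
    1 / q + 1 / q ^ 2 + 1 / q ^ 4 + 1 / q ^ 7 + 1 / q ^ 8 := by
  simp [psum, Finset.sum_range_succ, tm]

lemma lt_of_psum_four {p : ℝ} (hp : 1 < p) (h : psum p (fun i => tm (1 + i)) 4 < 1) :
    7 / 4 < p := by
  by_contra! hle
  have := psum_anti hp hle (fun i => tm (1 + i)) 4
  rw [psum_four (7 / 4)] at this
  norm_num at this
  linarith

lemma le_of_xval {q : ℝ} (hq : 1 < q) (h1 : xval q 1 = 1) : 7 / 4 ≤ q := by
  by_contra! hle
  have h := psum_anti hq hle.le (fun i => tm (1 + i)) 4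
  have h2 := psum_le_val hq (d := fun i => tm (1 + i)) (fun i => tm_le _) 4
  rw [psum_four (7 / 4)] at h
  norm_num at h
  unfold xval at h1
  linarith

lemma lt_of_xval {q : ℝ} (hq : 1 < q) (hq2 : q < 2) (h1 : xval q 1 = 1) : q < 9 / 5 := by
  by_contra! hle
  have h := psum_anti (by norm_num) hle (fun i => tm (1 + i)) 8
  have h2 := xval_split hq 1 8
  have h3 := xval_le hq hq2 h1 (j := 1 + 8) (by omega)
  have h4 : xval q (1 + 8) / q ^ 8 ≤ 1 / (9 / 5) ^ 8 := by gcongr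
  rw [psum_eight (9 / 5)] at h
  norm_num at h h4
  linarith

/-! ### The forbidden words -/

/-- Let `τ_n … τ_{n+l}` end in `1`. Either some `1` in it is followed by the reflection of
`τ₁ … τ_{r+1}` up to the end of the word, or the word is a long suffix of some `τ₁ … τ_{2^{a+1}}`, or
it is `1` or `01`. -/
def WordType (n l : ℕ) : Prop :=
  (∃ h r, l = h + r + 1 ∧ tm (n + h) = 1 ∧ ∀ j ≤ r, tm (n + h + 1 + j) = 1 - tm (1 + j)) ∨
  (∃ a m, 1 ≤ a ∧ 2 ≤ m ∧ m ≤ 2 ^ a ∧ m + l = 2 ^ (a + 1) ∧ ∀ t ≤ l, tm (n + t) = tm (m + t)) ∨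
  l = 0 ∨ (l = 1 ∧ tm n = 0)

lemma wordType_shift {n m l : ℕ} (h : ∀ t ≤ l, tm (n + t) = tm (m + t)) (hm : WordType m l) :
    WordType n l := by
  rcases hm with ⟨b, r, hl, hb, hr⟩ | ⟨a, c, ha, hc, hca, hcl, hw⟩ | hl | ⟨hl, h0⟩
  · refine Or.inl ⟨b, r, hl, by rw [h b (by omega), hb], fun j hj => ?_⟩
    have := h (b + 1 + j) (by omega)
    simp only [← add_assoc] at this
    rw [this, hr j hj]
  · exact Or.inr (Or.inl ⟨a, c, ha, hc, hca, hcl, fun t ht => by rw [h t ht, hw t ht]⟩)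
  · exact Or.inr (Or.inr (Or.inl hl))
  · exact Or.inr (Or.inr (Or.inr ⟨hl, by have := h 0 (by omega); simpa [h0] using this⟩))

/-- If a power of two lies in `[n, N)`, the largest one decides the type of `τ_n … τ_N`. -/
lemma wordType_of_pow {n l c : ℕ} (hn : 2 ≤ n) (hc : n ≤ 2 ^ c) (hl : 2 ^ c < n + l) :
    WordType n l := by
  obtain ⟨a, ha1, ha2⟩ : ∃ a, 2 ^ a < n + l ∧ n + l ≤ 2 ^ (a + 1) := by
    refine ⟨Nat.log 2 (n + l - 1), ?_, ?_⟩
    · have := Nat.pow_log_le_self 2 (x := n + l - 1) (by omega)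
      omega
    · have := Nat.lt_pow_succ_log_self (b := 2) (by norm_num) (n + l - 1)
      simp only [Nat.succ_eq_add_one] at this
      omega
  have hca : c ≤ a := by
    by_contra! h
    have := Nat.pow_le_pow_right (n := 2) (by norm_num) (Nat.succ_le_of_lt h)
    simp only [Nat.succ_eq_add_one] at this
    omega
  have hna : n ≤ 2 ^ a := hc.trans (Nat.pow_le_pow_right (by norm_num) hca)
  rcases ha2.eq_or_lt with h | h
  · refine Or.inr (Or.inl ⟨a, n, ?_, hn, hna, h, fun t _ => rfl⟩)
    by_contra! h0
    obtain rfl : a = 0 := by omega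
    simp at hna
    omega
  · rw [pow_succ] at h
    refine Or.inl ⟨2 ^ a - n, n + l - 2 ^ a - 1, by omega, ?_, fun j hj => ?_⟩
    · rw [Nat.add_sub_cancel' hna, tm_two_pow]
    · rw [Nat.add_sub_cancel' hna, add_assoc, tm_two_pow_add a _ (by omega)]

lemma memS_two_le {n : ℕ} (hn : memS n) : 2 ≤ n := by
  induction hn with
  | two => omega
  | three => omega
  | four => omega
  | step k n hk h1 h2 h3 h ih => omega

lemma memS_wordType {n : ℕ} (hn : memS n) (l : ℕ) (hl : tm (n + l) = 1) : WordType n l := by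
  induction hn generalizing l with
  | two =>
    rcases Nat.eq_zero_or_pos l with rfl | h
    · exact Or.inr (Or.inr (Or.inl rfl))
    · exact wordType_of_pow (c := 1) (by omega) (by norm_num) (by omega)
  | three =>
    rcases (by omega : l = 0 ∨ l = 1 ∨ 2 ≤ l) with rfl | rfl | h
    · exact Or.inr (Or.inr (Or.inl rfl))
    · exact Or.inr (Or.inr (Or.inr ⟨rfl, by simp [tm]⟩))
    · exact wordType_of_pow (c := 2) (by omega) (by norm_num) (by omega)
  | four =>
    rcases Nat.eq_zero_or_pos l with rfl | h
    · exact Or.inr (Or.inr (Or.inl rfl))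
    · exact wordType_of_pow (c := 2) (by omega) (by norm_num) (by omega)
  | step k n hk h1 h2 h3 h ih =>
    have h2m := memS_two_le h
    rcases le_or_gt (n + l) (2 ^ (k + 1)) with hle | hgt
    · obtain ⟨a, rfl⟩ : ∃ a, k = a + 1 := ⟨k - 1, by omega⟩
      simp only [Nat.add_sub_cancel] at *
      obtain ⟨m, rfl⟩ := Nat.exists_eq_add_of_le h3.le
      have hpow : 2 ^ (a + 1 + 1) = 3 * 2 ^ a + 2 ^ a := by ring
      rw [Nat.add_sub_cancel_left] at ih
      have hsh : ∀ t ≤ l, tm (3 * 2 ^ a + m + t) = tm (m + t) := fun t ht => by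
        rw [add_assoc, tm_three_mul_add a _ (by omega)]
      exact wordType_shift hsh (ih l (by rw [← hsh l le_rfl, hl]))
    · exact wordType_of_pow (c := k + 1) (by omega) h2 hgt

/-! ### Excluding the long suffixes -/

/-- If `p` lies above the base in which `τ₁ … τ_{2^i}` has value `1`, then the suffix
`τ_m … τ_{2^i}` is smaller than `x_m` by a definite amount. -/
lemma xval_sub_psum_ge {p q : ℝ} (hp : 1 < p) (hpq : p < q) (h1 : xval q 1 = 1) {K : ℕ}
    (hK : psum p (fun i => tm (1 + i)) K < 1) (m l : ℕ) (hm : 2 ≤ m) (hml : m + l = K + 1) :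
    q ^ (m - 2) * (q - p) ≤ xval q m - psum p (fun i => tm (m + i)) l := by
  have hq : 1 < q := hp.trans hpq
  induction m, hm using Nat.le_induction generalizing l with
  | base =>
    obtain rfl : K = l + 1 := by omega
    have e1 := xval_succ hq 1
    have e2 := psum_cons hp (fun i => tm (1 + i)) l
    rw [h1] at e1
    have e3 : (fun i => tm (1 + (1 + i))) = fun i => tm (2 + i) := by
      funext i; congr 1; ring
    simp only [e3, add_zero, tm_one] at e2
    simp only [tm_one] at e1
    norm_num at e1 e2 ⊢
    nlinarith
  | succ m hm ih =>
    have hi := ih (l + 1) (by omega)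
    have e1 := xval_succ hq m
    have e2 := psum_cons hp (fun i => tm (m + i)) l
    have e3 : (fun i => tm (m + (1 + i))) = fun i => tm (m + 1 + i) := by
      funext i; congr 1; ring
    simp only [e3, add_zero] at e2
    have e4 := psum_nonneg hp (fun i => tm (m + i)) (l + 1)
    rw [show m + 1 - 2 = m - 2 + 1 by omega, pow_succ]
    have e5 : q ^ (m - 2) * (q - p) * q ≤
        (xval q m - psum p (fun i => tm (m + i)) (l + 1)) * q := by gcongr
    nlinarith

/-- The tail of the Thue–Morse sequence after `2 ^ i` exceeds its lower bound
`1 / (q - 1) - 1`, the value of the reflection of `τ₁τ₂…`, only slightly. -/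
lemma xval_two_pow_le {q : ℝ} (hq : 1 < q) (hq2 : q < 2) (h1 : xval q 1 = 1) (i : ℕ) :
    xval q (2 ^ i + 1) ≤ 1 / (q - 1) - 1 + 1 / q ^ (2 ^ i - 1) := by
  have hpos : 0 < 2 ^ i := by positivity
  have e1 := xval_split hq (2 ^ i + 1) (2 ^ i - 1)
  have e2 : psum q (fun j => tm (2 ^ i + 1 + j)) (2 ^ i - 1) =
      psum q (fun j => 1 - tm (1 + j)) (2 ^ i - 1) := psum_congr fun j hj => by
    rw [add_assoc, tm_two_pow_add i _ (by omega)]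
  have e3 := psum_le_val hq (d := fun j => 1 - tm (1 + j)) (fun j => Nat.sub_le _ _) (2 ^ i - 1)
  have e4 := val_compl hq (d := fun j => tm (1 + j)) (fun j => tm_le _)
  have e5 : xval q (2 ^ i + 1 + (2 ^ i - 1)) / q ^ (2 ^ i - 1) ≤ 1 / q ^ (2 ^ i - 1) := by
    have := xval_le hq hq2 h1 (j := 2 ^ i + 1 + (2 ^ i - 1)) (by omega)
    gcongr
  unfold xval at *
  linarith

lemma suffix_le {p q : ℝ} (hp : 1 < p) (hpq : p < q) (hq2 : q < 2) (h1 : xval q 1 = 1)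
    (hgold : p + 1 < p ^ 2) {a m l : ℕ} (ha : 1 ≤ a) (hm : 2 ≤ m) (hma : m ≤ 2 ^ a)
    (hml : m + l = 2 ^ (a + 1)) (hF : psum p (fun i => tm (1 + i)) (2 ^ (a + 1)) < 1) :
    psum p (fun i => tm (m + i)) (l + 1) ≤
      psum q (fun i => tm (m + i)) (l + 1) + (1 / (q - 1) - 1) / q ^ (l + 1) := by
  have hq : 1 < q := hp.trans hpq
  have hq95 := lt_of_xval hq hq2 h1
  have hq74 := le_of_xval hq h1
  have hp1 : 0 < p - 1 := by linarith
  have hq1 : 0 < q - 1 := by linarith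
  rcases (by omega : a = 1 ∨ 2 ≤ a) with rfl | ha2
  · obtain rfl : m = 2 := by omega
    obtain rfl : l = 2 := by omega
    have hp74 := lt_of_psum_four hp hF
    have e : ∀ s : ℝ, psum s (fun i => tm (2 + i)) (2 + 1) = 1 / s + 1 / s ^ 3 := fun s => by
      simp [psum, Finset.sum_range_succ, tm]
    rw [e, e]
    have b1 : 1 / p + 1 / p ^ 3 ≤ 1 / (7 / 4) + 1 / (7 / 4) ^ 3 := by gcongr
    have b2 : 1 / (9 / 5 : ℝ) + 1 / ((9 / 5) ^ 3 * (4 / 5)) ≤ 1 / q + 1 / (q ^ 3 * (q - 1)) := by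
      gcongr
      linarith
    have b3 : 1 / q ^ 3 + (1 / (q - 1) - 1) / q ^ (2 + 1) = 1 / (q ^ 3 * (q - 1)) := by
      field_simp
      ring
    norm_num at b1 b2 b3 ⊢
    linarith
  · by_contra! hlt
    have hp16 : 8 / 5 < p := by nlinarith
    have c1 := psum_sub_le hp hpq.le (d := fun i => tm (m + i)) (fun i => tm_le _) (l + 1)
    have c2 := xval_sub_psum_ge hp hpq h1 hF m (l + 1) hm (by omega)
    have c3 := xval_split hq m (l + 1)
    have c4 := xval_two_pow_le hq hq2 h1 (a + 1)
    rw [show m + (l + 1) = 2 ^ (a + 1) + 1 by omega] at c3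
    set Q := q ^ (l + 1) with hQ
    have hQ0 : 0 < Q := by positivity
    set R := q ^ (2 ^ (a + 1) - 1) with hR
    have hR0 : 0 < R := by positivity
    have c5 : xval q (2 ^ (a + 1) + 1) / Q ≤ (1 / (q - 1) - 1 + 1 / R) / Q := by gcongr
    have c6 : q - p ≤ q ^ (m - 2) * (q - p) :=
      le_mul_of_one_le_left (by linarith) (one_le_pow₀ hq.le)
    -- upper and lower bounds on `q - p`, incompatible once `2 ^ (a + 1) ≥ 8`
    have d1 : q - p < 1 / R / Q := by
      rw [add_div] at c5
      linarith
    have d2 : (1 / (q - 1) - 1) / Q < 1 / (p - 1) - 1 / (q - 1) := by linarith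
    have d3 : (2 - q) * (p - 1) < (q - p) * Q := by
      have e1 : (1 / (q - 1) - 1) / Q = (2 - q) / ((q - 1) * Q) := by field_simp; ring
      have e2 : 1 / (p - 1) - 1 / (q - 1) = (q - p) / ((p - 1) * (q - 1)) := by field_simp; ring
      rw [e1, e2, div_lt_div_iff₀ (by positivity) (by positivity)] at d2
      have : (q - 1) * ((2 - q) * (p - 1)) < (q - 1) * ((q - p) * Q) := by linarith
      exact lt_of_mul_lt_mul_left this hq1.le
    have d4 : (q - p) * Q < 1 / R := by rwa [← lt_div_iff₀ hQ0]
    have d5 : (7 / 4 : ℝ) ^ 7 ≤ R := by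
      have h8 : 8 ≤ 2 ^ (a + 1) := by
        calc 8 = 2 ^ 3 := by norm_num
          _ ≤ 2 ^ (a + 1) := Nat.pow_le_pow_right (by norm_num) (by omega)
      calc (7 / 4 : ℝ) ^ 7 ≤ q ^ 7 := by gcongr
        _ ≤ R := pow_le_pow_right₀ hq.le (by omega)
    have d6 : 1 / R ≤ 1 / (7 / 4 : ℝ) ^ 7 := by gcongr
    have d7 : 1 / (7 / 4 : ℝ) ^ 7 ≤ 1 / 50 := by norm_num
    nlinarith

/-! ### Comparing the two expansions -/

/-- If a digit `1` of a univoque sequence is followed by the reflections of `e 0, …, e (r - 1)`,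
then `e 0 … e (r - 1)` followed by the reflected remainder has value below `1`. -/
lemma Univoque.reflected_lt {p : ℝ} (hp : 1 < p) (hp2 : p ≤ 2) {d : ℕ → ℕ} (hd : Univoque p d)
    {h r : ℕ} (hh : d h = 1) {e : ℕ → ℕ} (he : ∀ j < r, 1 - d (h + 1 + j) = e j) :
    psum p e r + (1 / (p - 1) - val p (fun i => d (h + 1 + r + i))) / p ^ r < 1 := by
  have h1 := hd.val_tail_of_one hp hp2 hh
  have h2 := val_compl hp (hd.tail hp (h + 1)).1
  have h3 := val_split hp (d := fun i => 1 - d (h + 1 + i)) (fun i => Nat.sub_le _ _) r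
  have h4 := val_compl hp (hd.tail hp (h + 1 + r)).1
  rw [psum_congr he] at h3
  simp only [← add_assoc] at h3
  rw [← h4, add_sub_cancel_left]
  linarith

lemma exists_ne_succ {d : ℕ → ℕ} {i : ℕ} (h : d i ≠ d 0) : ∃ l, d l ≠ d (l + 1) := by
  by_contra! hc
  apply h
  clear h
  induction i with
  | zero => rfl
  | succ i ih => rw [← hc i, ih]

/-- At the first difference between the two expansions the digit of `d` cannot be `0`. -/
lemma no_smaller_digit {p q : ℝ} (hp : 1 < p) (hpq : p < q) (hq2 : q < 2) (h1 : xval q 1 = 1)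
    {n : ℕ} (hn : memS n) {d : ℕ → ℕ} (hd : Univoque p d) (hv : val p d = xval q n)
    (hgold : p + 1 < p ^ 2) {l : ℕ}
    (hpre : ∀ i < l, d i = tm (n + i)) (hdl : d l = 0) (htl : tm (n + l) = 1) : False := by
  have hq : 1 < q := hp.trans hpq
  have hp2 : p ≤ 2 := by linarith
  have hp1 : 0 < p - 1 := by linarith
  have hq1 : 0 < q - 1 := by linarith
  have hn2 := memS_two_le hn
  have hq95 := lt_of_xval hq hq2 h1
  have hT := hd.val_tail_of_zero hp hp2 hdl
  -- the upper bound for `x_n` from base `p`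
  have up : xval q n < psum p (fun i => tm (n + i)) (l + 1) := by
    rw [← hv, val_split hp hd.1 (l + 1), psum_succ, psum_succ, psum_congr hpre, hdl, htl]
    have : val p (fun i => d (l + 1 + i)) / p ^ (l + 1) < 1 / p ^ (l + 1) := by gcongr
    push_cast
    rw [zero_div]
    linarith
  -- the lower bound for `x_n` from base `q`
  have lo : psum q (fun i => tm (n + i)) (l + 1) + (1 / (q - 1) - 1) / q ^ (l + 1) ≤ xval q n := by
    rw [xval_split hq n (l + 1)]
    have := xval_ge hq h1 (j := n + l) (by omega) htl
    rw [add_assoc] at this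
    gcongr
  have hlt := lo.trans_lt up
  rcases memS_wordType hn l htl with ⟨h, r, hl, hb, hr⟩ | ⟨a, m, ha, hm, hma, hml, hw⟩ | rfl |
    ⟨rfl, h0⟩
  · -- `d` contains a `1` followed by something smaller than the reflection of `τ₁τ₂…`
    have hh : d h = 1 := by rw [hpre h (by omega), hb]
    have hc := hd.reflected_lt hp hp2 hh (r := r + 1)
      (e := fun j => 1 - d (h + 1 + j)) (fun j _ => rfl)
    have hnn : 0 ≤ (1 / (p - 1) - val p (fun i => d (h + 1 + (r + 1) + i))) / p ^ (r + 1) :=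
      div_nonneg (sub_nonneg.2 (val_le hp (hd.tail hp _).1)) (by positivity)
    have e1 : psum p (fun j => 1 - d (h + 1 + j)) r = psum p (fun j => tm (1 + j)) r :=
      psum_congr fun j hj => by
        have := hr j hj.le
        have := tm_le (1 + j)
        rw [hpre (h + 1 + j) (by omega), ← add_assoc, ← add_assoc]
        omega
    have e2 : d (h + 1 + r) = 0 := by rw [← hdl, hl]; congr 1; ring
    have e3 : tm (1 + r) = 0 := by
      have h' := hr r le_rfl
      rw [show n + h + 1 + r = n + l by omega, htl] at h'
      have := tm_le (1 + r)
      omega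
    have e4 := xval_split hq 1 (r + 1)
    rw [psum_succ, e3, h1] at e4
    rw [psum_succ, e1, e2] at hc
    have e5 : xval q (1 + (r + 1)) / q ^ (r + 1) ≤ 1 / p ^ (r + 1) := by
      have := xval_le hq hq2 h1 (j := 1 + (r + 1)) (by omega)
      gcongr
    have e6 := psum_anti hp hpq.le (fun i => tm (1 + i)) r
    push_cast at e4 hc
    rw [zero_div] at e4
    norm_num at hc e4 e5 hnn
    linarith
  · -- `d` contains the word `1`, reflection of `τ₁ … τ_H`, where `H = 2 ^ a`
    set H := 2 ^ a with hH
    have hpow : 2 ^ (a + 1) = H + H := by rw [hH]; ring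
    have hHpos : 0 < H := by positivity
    have hh : d (H - m) = 1 := by
      rw [hpre _ (by omega), hw _ (by omega), Nat.add_sub_cancel' hma, hH, tm_two_pow]
    have hc := hd.reflected_lt hp hp2 hh (r := H) (e := fun j => tm (1 + j)) (fun j hj => by
      rcases (by omega : j + 1 < H ∨ j + 1 = H) with hj' | hj'
      · have h2 := tm_le (1 + j)
        rw [hpre _ (by omega), hw _ (by omega), show m + (H - m + 1 + j) = H + (1 + j) by omega,
          hH, tm_two_pow_add a _ (by omega)]
        omega
      · rw [show H - m + 1 + j = l by omega, hdl, show 1 + j = H by omega, hH, tm_two_pow])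
    rw [show H - m + 1 + H = l + 1 by omega] at hc
    have hF : psum p (fun i => tm (1 + i)) (2 ^ (a + 1)) < 1 := by
      set G := psum p (fun i => tm (1 + i)) H with hG
      have f1 : psum p (fun i => tm (1 + (H + i))) H =
          psum p (fun i => 1 - tm (1 + i)) H + 1 / p ^ H := by
        obtain ⟨c, hc'⟩ : ∃ c, H = c + 1 := ⟨H - 1, by omega⟩
        have g1 : psum p (fun i => tm (1 + (H + i))) c = psum p (fun i => 1 - tm (1 + i)) c :=
          psum_congr fun i hi => by
            rw [show 1 + (H + i) = H + (1 + i) by ring, hH, tm_two_pow_add a _ (by omega)]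
        have g2 : tm (1 + (H + c)) = 1 := by
          rw [show 1 + (H + c) = 2 ^ (a + 1) by omega, tm_two_pow]
        have g3 : tm (1 + c) = 1 := by
          rw [show 1 + c = H by omega, hH, tm_two_pow]
        calc psum p (fun i => tm (1 + (H + i))) H
            = psum p (fun i => tm (1 + (H + i))) (c + 1) := by rw [← hc']
          _ = psum p (fun i => 1 - tm (1 + i)) (c + 1) + 1 / p ^ (c + 1) := by
            rw [psum_succ, psum_succ, g1, g2, g3]; norm_num
          _ = _ := by rw [← hc']
      have f2 := psum_compl hp (d := fun i => tm (1 + i)) (fun i => tm_le _) H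
      have f3 : G + (1 / (p - 1) - 1) / p ^ H < 1 := by
        refine lt_of_le_of_lt ?_ hc
        gcongr
      rw [hpow, psum_split, f1]
      have f4 : psum p (fun i => 1 - tm (1 + i)) H = (1 - 1 / p ^ H) / (p - 1) - G := by
        linarith
      rw [f4]
      have hP : 1 < p ^ H := one_lt_pow₀ hp (by omega)
      -- the two inequalities are equivalent: both sides differ by the factor `1 - p ^ (-H)`
      have f5 : G + ((1 - 1 / p ^ H) / (p - 1) - G + 1 / p ^ H) / p ^ H =
          1 - (1 - 1 / p ^ H) * (1 - (G + (1 / (p - 1) - 1) / p ^ H)) := by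
        field_simp
        ring
      rw [f5]
      have f6 : 0 < 1 - 1 / p ^ H := by
        rw [sub_pos, div_lt_one (by positivity)]; exact hP
      have := mul_pos f6 (sub_pos.2 f3)
      linarith
    have hs := suffix_le hp hpq hq2 h1 hgold ha hm hma hml hF
    rw [psum_congr (e := fun i => tm (m + i)) (fun i hi => hw i (by omega)),
      psum_congr (e := fun i => tm (m + i)) (fun i hi => hw i (by omega))] at hlt
    linarith
  · -- the word `1`
    have e : ∀ s : ℝ, psum s (fun i => tm (n + i)) (0 + 1) = 1 / s := fun s => by
      simp at htl
      simp [psum, htl]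
    rw [e, e] at hlt
    have e2 : 1 / q + (1 / (q - 1) - 1) / q ^ (0 + 1) = 1 / (q * (q - 1)) := by
      field_simp
      ring
    rw [e2, div_lt_div_iff₀ (by positivity) (by positivity)] at hlt
    nlinarith
  · -- the word `01`
    have e : ∀ s : ℝ, psum s (fun i => tm (n + i)) (1 + 1) = 1 / s ^ 2 := fun s => by
      simp [psum, Finset.sum_range_succ, htl, h0]
    rw [e, e] at hlt
    have e2 : 1 / q ^ 2 + (1 / (q - 1) - 1) / q ^ (1 + 1) = 1 / (q ^ 2 * (q - 1)) := by
      field_simp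
      ring
    rw [e2, div_lt_div_iff₀ (by positivity) (by positivity)] at hlt
    have hp16 : 1.61 < p := by nlinarith
    have : q ^ 2 * (q - 1) ≤ (9 / 5) ^ 2 * (4 / 5) := by gcongr; linarith
    norm_num at this hp16
    nlinarith

/-- for `n ∈ S` with `2^{k-1} < n ≤ 2^k`, any unique expansion of
`x_n` in a base `p ∈ 𝒰(x_n)` with `p < q_KL` begins with `τ_n ⋯ τ_{2^k}`. -/
theorem expansion_begins_with_tm (qKL : ℝ) (hKL : qKL ∈ Set.Ioo (1 : ℝ) 2)
    (hKLsum : ∑' i : ℕ, (tm (i + 1) : ℝ) / qKL ^ (i + 1) = 1)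
    (n k : ℕ) (hn : memS n) (hk : 1 ≤ k)
    (hnk1 : 2 ^ (k - 1) < n) (hnk2 : n ≤ 2 ^ k)
    (p : ℝ) (hpKL : p < qKL)
    (hp : p ∈ UnivSet (∑' i : ℕ, (tm (n + i) : ℝ) / qKL ^ (i + 1)))
    (d : ℕ → ℕ)
    (hd : IsExpansion p (∑' i : ℕ, (tm (n + i) : ℝ) / qKL ^ (i + 1)) d) :
    ∀ i ≤ 2 ^ k - n, d i = tm (n + i) := by
  obtain ⟨⟨hp1, hp2⟩, d₀, _, huniq⟩ := hp
  obtain ⟨hq, hq2⟩ := hKL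
  have h1 : xval qKL 1 = 1 := by
    rw [← hKLsum]
    simp only [xval, val, add_comm 1]
  have hd' : Univoque p d := by
    refine ⟨hd.1, fun e he hev => ?_⟩
    rw [huniq d hd]
    exact huniq e ⟨he, hd.2.trans hev.symm⟩
  have hv : val p d = xval qKL n := hd.2.symm
  have hn2 := memS_two_le hn
  -- `x_n` is neither `0` nor `1 / (p - 1)`, so `d` is not constant
  have hx1 := xval_le hq hq2 h1 (j := n) (by omega)
  have hx0 : 0 < xval qKL n := by
    have h2k : n ≤ 2 ^ k := hnk2
    have := xval_split hq n (2 ^ k - n)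
    have hs := xval_succ hq (2 ^ k)
    have h3 := xval_nonneg hq (2 ^ k + 1)
    have h4 := psum_nonneg hq (fun i => tm (n + i)) (2 ^ k - n)
    rw [Nat.add_sub_cancel' h2k] at this
    rw [tm_two_pow] at hs
    push_cast at hs
    have h5 : 0 < xval qKL (2 ^ k) := by
      by_contra! hc
      nlinarith
    have : 0 < xval qKL (2 ^ k) / qKL ^ (2 ^ k - n) := by positivity
    linarith
  have hgold : p + 1 < p ^ 2 := by
    obtain ⟨i, hi⟩ : ∃ i, d i ≠ d 0 := by
      by_contra! hc
      have hdc : d = fun _ => d 0 := funext hc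
      have h0 := hd.1 0
      rcases (by omega : d 0 = 0 ∨ d 0 = 1) with h | h
      · rw [hdc, h] at hv
        simp [val] at hv
        linarith
      · have := val_compl hp1 hd.1
        rw [hv, hdc, h] at this
        simp [val] at this
        have h6 : 1 < (p - 1)⁻¹ := by
          rw [one_lt_inv₀ (by linarith)]; linarith
        linarith
    obtain ⟨l, hl⟩ := exists_ne_succ hi
    exact hd'.golden hp1 hp2 hl
  intro i _
  induction i using Nat.strong_induction_on with
  | _ l ih =>
    have hpre : ∀ i < l, d i = tm (n + i) := fun i hi => ih i hi (by omega)
    by_contra hne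
    have := hd.1 l
    have := tm_le (n + l)
    rcases (by omega : d l = 0 ∧ tm (n + l) = 1 ∨ d l = 1 ∧ tm (n + l) = 0) with ⟨a, b⟩ | ⟨a, b⟩
    · exact no_smaller_digit hp1 hpKL hq2 h1 hn hd' hv hgold hpre a b
    · -- a larger digit makes the expansion in the smaller base too large
      have e1 := val_split hp1 hd.1 (l + 1)
      have e2 := xval_split hq n (l + 1)
      rw [psum_succ, psum_congr hpre, a, hv] at e1
      rw [psum_succ, b] at e2
      have e3 := psum_anti hp1 hpKL.le (fun i => tm (n + i)) l
      have e4 : xval qKL (n + (l + 1)) / qKL ^ (l + 1) ≤ 1 / qKL ^ (l + 1) := by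
        have := xval_le hq hq2 h1 (j := n + (l + 1)) (by omega)
        gcongr
      have e5 : 1 / qKL ^ (l + 1) < 1 / p ^ (l + 1) := by
        have : p ^ (l + 1) < qKL ^ (l + 1) := pow_lt_pow_left₀ hpKL (by linarith) (by omega)
        gcongr
      have e6 : 0 ≤ val p (fun i => d (l + 1 + i)) / p ^ (l + 1) :=
        div_nonneg (val_nonneg hp1 _) (by positivity)
      push_cast at e1 e2
      rw [zero_div] at e2
      linarith
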